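/- arXiv:1707.01210 — 4 statements merged into one kernel-verified Lean document; each statement's English description precedes it below -/
import Mathlib

section
/- For every index n with 0 ≤ n ≤ P−1, the differential-mode alien noise z_d(n) = Σ_{k=0}^{L−1} h(k) z_c(n−k) decomposes as z_d(n) = Σ_{k=0}^{L−1} h(k) z_{c-cyc}(n−k) + d(n), where the deviation term d satisfies: d(n) = Σ_{k=T+1}^{L−1−n} (z_c(−k) − z_c(P−k)) h(k+n) for 0 ≤ n ≤ L−T−2; d(n) = Σ_{k=0}^{n−(P−T)} (z_c(n−k) − z_c(n−k−P)) h(k) for P−T ≤ n ≤ P−1; and d(n) = 0 for all other n in [0, P−1]. -/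
open Finset

/-- decomposition of the DM alien noise into a cyclic convolution part
plus the deviation term `d` over the DFT window `0 ≤ n ≤ P-1`. -/
theorem pertone_deviation_decomposition
    (P L T : ℕ) (hTL : T < L) (hLP : L ≤ P)
    (zc h zd zccyc d : ℤ → ℝ)
    (hsupp : ∀ k : ℤ, k < 0 ∨ (L : ℤ) ≤ k → h k = 0)
    (hzd : ∀ n : ℤ, zd n = ∑ k ∈ Finset.range L, h (k : ℤ) * zc (n - (k : ℤ)))
    (hcyc : ∀ m : ℤ, zccyc m = zc ((m + (T : ℤ)) % (P : ℤ) - (T : ℤ)))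
    (hd1 : ∀ n : ℤ, 0 ≤ n → n ≤ (L : ℤ) - (T : ℤ) - 2 →
      d n = ∑ k ∈ Finset.Icc ((T : ℤ) + 1) ((L : ℤ) - 1 - n),
        (zc (-k) - zc ((P : ℤ) - k)) * h (k + n))
    (hd2 : ∀ n : ℤ, (P : ℤ) - (T : ℤ) ≤ n → n ≤ (P : ℤ) - 1 →
      d n = ∑ k ∈ Finset.Icc (0 : ℤ) (n - ((P : ℤ) - (T : ℤ))),
        (zc (n - k) - zc (n - k - (P : ℤ))) * h k)
    (hd3 : ∀ n : ℤ, 0 ≤ n → n ≤ (P : ℤ) - 1 →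
      (L : ℤ) - (T : ℤ) - 2 < n → n < (P : ℤ) - (T : ℤ) → d n = 0) :
    ∀ n : ℤ, 0 ≤ n → n ≤ (P : ℤ) - 1 →
      zd n = (∑ k ∈ Finset.range L, h (k : ℤ) * zccyc (n - (k : ℤ))) + d n := by
  intro n hn0 hn1
  have conv : ∀ f : ℤ → ℝ, ∑ k ∈ Finset.range L, f (k : ℤ)
      = ∑ k ∈ Finset.Icc (0 : ℤ) ((L : ℤ) - 1), f k := by
    intro f
    refine Finset.sum_bij (fun k _ => (k : ℤ)) ?_ ?_ ?_ ?_
    · intro a ha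
      simp only [Finset.mem_range, Finset.mem_Icc] at *
      omega
    · intro a _ b _ hab
      simpa using hab
    · intro b hb
      simp only [Finset.mem_Icc] at hb
      refine ⟨b.toNat, ?_, ?_⟩
      · simp only [Finset.mem_range]
        omega
      · omega
    · intro a _
      rfl
  have mid : ∀ m : ℤ, -(T : ℤ) ≤ m → m < (P : ℤ) - T → zccyc m = zc m := by
    intro m h1 h2
    rw [hcyc, Int.emod_eq_of_lt (by omega) (by omega)]
    congr 1
    omega
  have per1 : ∀ m : ℤ, zccyc (m + P) = zccyc m := by
    intro m
    rw [hcyc, hcyc, show m + (P : ℤ) + T = m + T + P by ring, Int.add_emod_right]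
  have low : ∀ m : ℤ, -(P : ℤ) ≤ m + T → m < -(T : ℤ) → zccyc m = zc (m + P) := by
    intro m h1 h2
    rw [← per1, mid _ (by omega) (by omega)]
  have high : ∀ m : ℤ, (P : ℤ) - T ≤ m → m < (P : ℤ) → zccyc m = zc (m - P) := by
    intro m h1 h2
    have := per1 (m - P)
    rw [sub_add_cancel] at this
    rw [this, mid _ (by omega) (by omega)]
  rw [← sub_eq_iff_eq_add', hzd, ← Finset.sum_sub_distrib,
    conv (fun k => h k * zc (n - k) - h k * zccyc (n - k))]
  by_cases c1 : n ≤ (L : ℤ) - T - 2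
  · rw [hd1 n hn0 c1]
    symm
    refine Finset.sum_bij_ne_zero (fun k _ _ => k + n) ?_ ?_ ?_ ?_
    · intro a ha _
      simp only [Finset.mem_Icc] at *
      omega
    · intro a _ _ b _ _ hab
      simpa using hab
    · intro b hb hne
      simp only [Finset.mem_Icc] at hb
      have hlow : n - b < -(T : ℤ) := by
        by_contra hc
        apply hne
        rw [mid _ (by omega) (by omega), sub_self]
      refine ⟨b - n, ?_, ?_, by ring⟩
      · simp only [Finset.mem_Icc]
        omega
      · rw [low _ (by omega) hlow] at hne
        intro h0
        apply hne
        rw [show -(b - n) = n - b by ring, show (P : ℤ) - (b - n) = n - b + P by ring,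
          sub_add_cancel] at h0
        linarith
    · intro a ha _
      simp only [Finset.mem_Icc] at ha
      rw [low _ (by omega) (by omega), show n - (a + n) = -a by ring,
        show -a + (P : ℤ) = P - a by ring]
      ring
  · by_cases c2 : (P : ℤ) - T ≤ n
    · rw [hd2 n c2 hn1]
      rw [← Finset.sum_subset (s₁ := Finset.Icc (0 : ℤ) (n - ((P : ℤ) - (T : ℤ))))]
      · apply Finset.sum_congr rfl
        intro a ha
        simp only [Finset.mem_Icc] at ha
        rw [high _ (by omega) (by omega)]
        ring
      · intro a ha
        simp only [Finset.mem_Icc] at *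
        omega
      · intro a ha hb
        simp only [Finset.mem_Icc] at *
        rw [mid _ (by omega) (by omega), sub_self]
    · rw [hd3 n hn0 hn1 (by omega) (by omega)]
      apply Finset.sum_eq_zero
      intro a ha
      simp only [Finset.mem_Icc] at ha
      rw [mid _ (by omega) (by omega), sub_self]
end

section
/- The DFT D(q) = Σ_{n=0}^{P−1} d(n) ω^{nq} of the deviation term admits the regrouping D(q) = Σ_{m=T+1}^{L−1} R_m(q) h(m) ω^{mq} + Σ_{m=0}^{T−1} S_m(q) h(m) ω^{mq}, where R_m(q) = Σ_{k=T+1}^{m} (z_c(−k) − z_c(P−k)) ω^{(P−k)q} and S_m(q) = Σ_{j=0}^{T−1−m} (z_c(P−T+j) − z_c(−T+j)) ω^{(j−T)q}. -/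
open Finset

/-- regrouping of the deviation DFT `D(q)` in terms of windowed
DFT quantities `R_m(q)` and `S_m(q)`. -/
theorem pertone_deviation_dft_regrouping
    (P L T : ℕ) (hP : 1 ≤ P) (hTL : T < L) (hLP : L ≤ P)
    (zc h d : ℤ → ℝ)
    (hsupp : ∀ k : ℤ, k < 0 ∨ (L : ℤ) ≤ k → h k = 0)
    (hd1 : ∀ n : ℤ, 0 ≤ n → n ≤ (L : ℤ) - (T : ℤ) - 2 →
      d n = ∑ k ∈ Finset.Icc ((T : ℤ) + 1) ((L : ℤ) - 1 - n),
        (zc (-k) - zc ((P : ℤ) - k)) * h (k + n))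
    (hd2 : ∀ n : ℤ, (P : ℤ) - (T : ℤ) ≤ n → n ≤ (P : ℤ) - 1 →
      d n = ∑ k ∈ Finset.Icc (0 : ℤ) (n - ((P : ℤ) - (T : ℤ))),
        (zc (n - k) - zc (n - k - (P : ℤ))) * h k)
    (hd3 : ∀ n : ℤ, 0 ≤ n → n ≤ (P : ℤ) - 1 →
      (L : ℤ) - (T : ℤ) - 2 < n → n < (P : ℤ) - (T : ℤ) → d n = 0)
    (ω : ℂ) (hω : ω = Complex.exp (-(2 * Real.pi * Complex.I) / (P : ℂ)))
    (R S : ℕ → ℕ → ℂ)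
    (hR : ∀ m q : ℕ, R m q = ∑ k ∈ Finset.Icc (T + 1) m,
      ((zc (-(k : ℤ)) - zc ((P : ℤ) - (k : ℤ)) : ℝ) : ℂ) * ω ^ (((P : ℤ) - (k : ℤ)) * (q : ℤ)))
    (hS : ∀ m q : ℕ, S m q = ∑ j ∈ Finset.range (T - m),
      ((zc ((P : ℤ) - (T : ℤ) + (j : ℤ)) - zc (-(T : ℤ) + (j : ℤ)) : ℝ) : ℂ)
        * ω ^ (((j : ℤ) - (T : ℤ)) * (q : ℤ))) :
    ∀ q : ℕ,
      ∑ n ∈ Finset.range P, (d (n : ℤ) : ℂ) * ω ^ (n * q)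
        = (∑ m ∈ Finset.Icc (T + 1) (L - 1), R m q * (h (m : ℤ) : ℂ) * ω ^ (m * q))
          + ∑ m ∈ Finset.range T, S m q * (h (m : ℤ) : ℂ) * ω ^ (m * q) := by
  intro q
  have hω0 : ω ≠ 0 := by rw [hω]; exact Complex.exp_ne_zero _
  have hP0 : (P : ℂ) ≠ 0 := by
    have : P ≠ 0 := by omega
    exact_mod_cast this
  have hωP : ω ^ P = 1 := by
    rw [hω, ← Complex.exp_nat_mul, mul_div_cancel₀ _ hP0, Complex.exp_neg, Complex.exp_two_pi_mul_I,
      inv_one]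
  have hωP' : ω ^ ((P : ℤ) * (q : ℤ)) = 1 := by
    rw [zpow_mul, zpow_natCast, zpow_natCast, hωP, one_pow]
  have hsplit : ∑ n ∈ Finset.range P, (d (n : ℤ) : ℂ) * ω ^ (n * q)
      = (∑ n ∈ Finset.range (L - T - 1), (d (n : ℤ) : ℂ) * ω ^ (n * q))
        + ∑ i ∈ Finset.range T, (d ((P - T + i : ℕ) : ℤ) : ℂ) * ω ^ ((P - T + i) * q) := by
    have e : P = (P - T) + T := by omega
    have h1 := Finset.sum_range_add (fun n : ℕ => (d (n : ℤ) : ℂ) * ω ^ (n * q)) (P - T) T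
    rw [← e] at h1
    rw [h1]
    congr 1
    symm
    apply Finset.sum_subset
    · intro x hx
      simp only [Finset.mem_range] at *
      omega
    · intro x hx hx'
      simp only [Finset.mem_range] at *
      rw [hd3 x (by omega) (by omega) (by omega) (by omega)]
      simp
  rw [hsplit]
  congr 1
  · have hL : ∀ n ∈ Finset.range (L - T - 1), (d (n : ℤ) : ℂ) * ω ^ (n * q) =
        ∑ k ∈ Finset.Icc ((T : ℤ) + 1) ((L : ℤ) - 1 - n),
        ((zc (-k) - zc ((P : ℤ) - k) : ℝ) : ℂ) * (h (k + n) : ℂ) * ω ^ (n * q) := by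
      intro n hn
      rw [Finset.mem_range] at hn
      rw [hd1 n (by omega) (by omega), ← Finset.sum_mul]
      push_cast
      rfl
    rw [Finset.sum_congr rfl hL]
    simp only [hR, Finset.sum_mul]
    rw [Finset.sum_sigma', Finset.sum_sigma']
    refine Finset.sum_bij' (fun x _ => ⟨(x.2 + x.1).toNat, x.2.toNat⟩)
      (fun x _ => ⟨x.1 - x.2, (x.2 : ℤ)⟩) ?_ ?_ ?_ ?_ ?_
    · rintro ⟨n, k⟩ hx
      simp only [Finset.mem_sigma, Finset.mem_range, Finset.mem_Icc] at *
      omega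
    · rintro ⟨n, k⟩ hx
      simp only [Finset.mem_sigma, Finset.mem_range, Finset.mem_Icc] at *
      omega
    · rintro ⟨n, k⟩ hx
      simp only [Finset.mem_sigma, Finset.mem_range, Finset.mem_Icc] at hx
      simp only [Sigma.mk.injEq, heq_eq_eq]
      omega
    · rintro ⟨n, k⟩ hx
      simp only [Finset.mem_sigma, Finset.mem_range, Finset.mem_Icc] at hx
      simp only [Sigma.mk.injEq, heq_eq_eq]
      omega
    · rintro ⟨n, k⟩ hx
      simp only [Finset.mem_sigma, Finset.mem_range, Finset.mem_Icc] at hx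
      dsimp only
      obtain ⟨k, rfl⟩ := Int.eq_ofNat_of_zero_le (a := k) (by omega)
      have e1 : ((k : ℤ) + n).toNat = k + n := by omega
      rw [e1, Int.toNat_natCast]
      have e2 : ω ^ (n * q) = ω ^ (((P : ℤ) - (k : ℤ)) * (q : ℤ)) * ω ^ ((k + n) * q) := by
        rw [← zpow_natCast, ← zpow_natCast, ← zpow_add₀ hω0]
        have : ((P : ℤ) - (k : ℤ)) * (q : ℤ) + (((k + n) * q : ℕ) : ℤ)
          = (P : ℤ) * q + ((n * q : ℕ) : ℤ) := by push_cast; ring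
        rw [this, zpow_add₀ hω0, hωP', one_mul]
      rw [e2]
      push_cast
      ring
  · have hL : ∀ i ∈ Finset.range T, (d ((P - T + i : ℕ) : ℤ) : ℂ) * ω ^ ((P - T + i) * q) =
        ∑ k ∈ Finset.range (i + 1),
        ((zc ((P : ℤ) - T + (i - k : ℕ)) - zc (-(T : ℤ) + (i - k : ℕ)) : ℝ) : ℂ) * (h k : ℂ)
          * ω ^ ((P - T + i) * q) := by
      intro n hn
      rw [Finset.mem_range] at hn
      rw [hd2 _ (by omega) (by omega), ← Finset.sum_mul, Complex.ofReal_sum]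
      congr 1
      refine Finset.sum_bij' (fun k _ => k.toNat) (fun k _ => (k : ℤ)) ?_ ?_ ?_ ?_ ?_
      · intro k hk
        simp only [Finset.mem_range, Finset.mem_Icc] at *
        omega
      · intro k hk
        simp only [Finset.mem_range, Finset.mem_Icc] at *
        omega
      · intro k hk
        simp only [Finset.mem_Icc] at *
        omega
      · intro k hk
        simp
      · intro k hk
        simp only [Finset.mem_Icc] at hk
        obtain ⟨k, rfl⟩ := Int.eq_ofNat_of_zero_le (a := k) (by omega)
        rw [Int.toNat_natCast, Complex.ofReal_mul]
        have e1 : ((P - T + n : ℕ) : ℤ) - k = (P : ℤ) - T + (n - k : ℕ) := by omega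
        have e2 : (P : ℤ) - T + (n - k : ℕ) - P = -(T : ℤ) + (n - k : ℕ) := by omega
        rw [e1, e2]
    rw [Finset.sum_congr rfl hL]
    simp only [hS, Finset.sum_mul]
    rw [Finset.sum_sigma', Finset.sum_sigma']
    refine Finset.sum_bij' (fun x _ => ⟨x.2, x.1 - x.2⟩)
      (fun x _ => ⟨x.1 + x.2, x.1⟩) ?_ ?_ ?_ ?_ ?_
    · rintro ⟨n, k⟩ hx
      simp only [Finset.mem_sigma, Finset.mem_range] at *
      omega
    · rintro ⟨n, k⟩ hx
      simp only [Finset.mem_sigma, Finset.mem_range] at *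
      omega
    · rintro ⟨n, k⟩ hx
      simp only [Finset.mem_sigma, Finset.mem_range] at hx
      have e3 : k + (n - k) = n := by omega
      simp [e3]
    · rintro ⟨n, k⟩ hx
      simp only [Finset.mem_sigma, Finset.mem_range] at hx
      have e3 : n + k - n = k := by omega
      simp [e3]
    · rintro ⟨n, k⟩ hx
      simp only [Finset.mem_sigma, Finset.mem_range] at hx
      dsimp only
      have e2 : ω ^ ((P - T + n) * q) =
          ω ^ ((((n - k : ℕ) : ℤ) - (T : ℤ)) * (q : ℤ)) * ω ^ (k * q) := by
        rw [← zpow_natCast, ← zpow_natCast, ← zpow_add₀ hω0]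
        have : (((P - T + n) * q : ℕ) : ℤ)
          = (P : ℤ) * q + ((((n - k : ℕ) : ℤ) - (T : ℤ)) * (q : ℤ) + ((k * q : ℕ) : ℤ)) := by
          rw [Nat.cast_mul, Nat.cast_add, Nat.cast_sub (by omega : T ≤ P),
            Nat.cast_sub (by omega : k ≤ n)]
          push_cast
          ring
        rw [this, zpow_add₀ hω0, hωP', one_mul]
      rw [e2]
      ring
end

section
/- For every m with T+1 ≤ m ≤ L−1 and every q, the windowed-DFT quantity R_m(q) = Σ_{k=T+1}^{m} (z_c(−k) − z_c(P−k)) ω^{(P−k)q} equals the circular convolution (1/P) Σ_{k=0}^{P−1} Z_c^{start-res}(q−k) B_m(k), where Z_c^{start-res}(p) = Σ_{k=−T}^{P−T−1} (z_c(k−P) − z_c(k)) ω^{kp}, B_m(p) = Σ_{k=P−m}^{P−T−1} ω^{kp}, and the argument q−k of Z_c^{start-res} is taken modulo P. -/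
open Finset

/-- `R_m(q)` equals the circular convolution of `Z_c^{start-res}` with the
rectangular-window DFT `B_m`, with the frequency argument taken modulo `P`. -/
theorem Rm_as_circular_convolution
    (P L T : ℕ) (hP : 1 ≤ P) (hTL : T < L) (hLP : L ≤ P)
    (zc : ℤ → ℝ)
    (ω : ℂ) (hω : ω = Complex.exp (-(2 * Real.pi * Complex.I) / (P : ℂ)))
    (Zstart : ℤ → ℂ)
    (hZ : ∀ p : ℤ, Zstart p = ∑ k ∈ Finset.Icc (-(T : ℤ)) ((P : ℤ) - (T : ℤ) - 1),
      ((zc (k - (P : ℤ)) - zc k : ℝ) : ℂ) * ω ^ (k * p))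
    (B : ℕ → ℤ → ℂ)
    (hB : ∀ (m : ℕ) (p : ℤ), B m p = ∑ k ∈ Finset.Icc ((P : ℤ) - (m : ℤ)) ((P : ℤ) - (T : ℤ) - 1),
      ω ^ (k * p)) :
    ∀ m : ℕ, T + 1 ≤ m → m ≤ L - 1 → ∀ q : ℕ,
      (∑ k ∈ Finset.Icc (T + 1) m,
          ((zc (-(k : ℤ)) - zc ((P : ℤ) - (k : ℤ)) : ℝ) : ℂ) * ω ^ (((P : ℤ) - (k : ℤ)) * (q : ℤ)))
        = (1 / (P : ℂ)) * ∑ k ∈ Finset.range P,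
            Zstart (((q : ℤ) - (k : ℤ)) % (P : ℤ)) * B m (k : ℤ) := by
  have hP0 : P ≠ 0 := by omega
  have hPC : (P : ℂ) ≠ 0 := by exact_mod_cast hP0
  have hprim : IsPrimitiveRoot ω P := by
    have h := (Complex.isPrimitiveRoot_exp P hP0).inv
    rw [← Complex.exp_neg] at h
    rw [hω, neg_div]
    exact h
  have hω0 : ω ≠ 0 := hprim.ne_zero hP0
  have horth : ∀ d : ℤ, -(P : ℤ) < d → d < P →
      ∑ k ∈ Finset.range P, (ω ^ d) ^ k = if d = 0 then (P : ℂ) else 0 := by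
    intro d h1 h2
    split_ifs with h
    · simp [h]
    · have hne : ω ^ d ≠ 1 := by
        intro h'
        rw [hprim.zpow_eq_one_iff_dvd] at h'
        exact h (Int.eq_zero_of_abs_lt_dvd h' (abs_lt.mpr ⟨h1, h2⟩))
      rw [geom_sum_eq hne]
      have : (ω ^ d) ^ P = 1 := by
        rw [← zpow_natCast, ← zpow_mul, mul_comm, zpow_mul, zpow_natCast, hprim.pow_eq_one,
          one_zpow]
      rw [this]; simp
  have hmod : ∀ i a : ℤ, ω ^ (i * (a % (P : ℤ))) = ω ^ (i * a) := by
    intro i a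
    have h : i * a = i * (a % (P : ℤ)) + (P : ℤ) * (i * (a / (P : ℤ))) := by
      conv_lhs => rw [← Int.emod_add_mul_ediv a P]
      ring
    rw [h, zpow_add₀ hω0, zpow_mul ω (P : ℤ), zpow_natCast, hprim.pow_eq_one, one_zpow, mul_one]
  intro m hm1 hm2 q
  have key : ∑ k ∈ Finset.range P, Zstart (((q : ℤ) - (k : ℤ)) % (P : ℤ)) * B m (k : ℤ)
      = (P : ℂ) * ∑ j ∈ Finset.Icc ((P : ℤ) - (m : ℤ)) ((P : ℤ) - (T : ℤ) - 1),
        ((zc (j - (P : ℤ)) - zc j : ℝ) : ℂ) * ω ^ (j * (q : ℤ)) := by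
    have h1 : ∀ k ∈ Finset.range P, Zstart (((q : ℤ) - (k : ℤ)) % (P : ℤ)) * B m (k : ℤ)
        = ∑ j ∈ Finset.Icc ((P : ℤ) - (m : ℤ)) ((P : ℤ) - (T : ℤ) - 1),
          ∑ i ∈ Finset.Icc (-(T : ℤ)) ((P : ℤ) - (T : ℤ) - 1),
            ((zc (i - (P : ℤ)) - zc i : ℝ) : ℂ) * ω ^ (i * (q : ℤ)) * (ω ^ (j - i)) ^ k := by
      intro k _
      rw [hZ, hB, Finset.sum_mul_sum, Finset.sum_comm]
      refine Finset.sum_congr rfl fun j _ => Finset.sum_congr rfl fun i _ => ?_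
      rw [hmod, mul_assoc, mul_assoc, ← zpow_natCast, ← zpow_mul, ← zpow_add₀ hω0,
        ← zpow_add₀ hω0]
      congr 2
      ring
    rw [Finset.sum_congr rfl h1, Finset.sum_comm, Finset.mul_sum]
    refine Finset.sum_congr rfl fun j hj => ?_
    rw [Finset.mem_Icc] at hj
    rw [Finset.sum_comm]
    rw [Finset.sum_eq_single j]
    · rw [← Finset.mul_sum, horth (j - j) (by omega) (by omega)]
      simp only [sub_self, if_true]
      ring
    · intro i hi hij
      rw [Finset.mem_Icc] at hi
      rw [← Finset.mul_sum, horth (j - i) (by omega) (by omega), if_neg (by omega), mul_zero]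
    · intro h
      exact absurd (Finset.mem_Icc.mpr ⟨by omega, by omega⟩) h
  rw [key, ← mul_assoc, one_div, inv_mul_cancel₀ hPC, one_mul]
  refine Finset.sum_bij (fun k _ => (P : ℤ) - (k : ℤ)) ?_ ?_ ?_ ?_
  · intro k hk
    rw [Finset.mem_Icc] at hk ⊢
    omega
  · intro a _ b _ h
    omega
  · intro j hj
    rw [Finset.mem_Icc] at hj
    exact ⟨((P : ℤ) - j).toNat, Finset.mem_Icc.mpr ⟨by omega, by omega⟩, by omega⟩
  · intro k _
    have : (P : ℤ) - (k : ℤ) - P = -(k : ℤ) := by ring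
    rw [this]
end

section
/- For every m with 0 ≤ m ≤ T−1 and every q, the windowed-DFT quantity S_m(q) = Σ_{j=0}^{T−1−m} (z_c(P−T+j) − z_c(−T+j)) ω^{(j−T)q} equals the circular convolution (1/P) Σ_{k=0}^{P−1} Z_c^{end-res}(q−k) C_m(k), where Z_c^{end-res}(p) = Σ_{k=−T}^{P−T−1} (z_c(k+P) − z_c(k)) ω^{kp}, C_m(p) = Σ_{k=−T}^{−m−1} ω^{kp}, and the argument q−k of Z_c^{end-res} is taken modulo P. -/
open Finset

theorem aux_orth (P : ℕ) (ω : ℂ) (h : IsPrimitiveRoot ω P) (d : ℤ)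
    (h1 : -(P : ℤ) < d) (h2 : d < P) :
    ∑ k ∈ Finset.range P, ω ^ (d * (k : ℤ)) = if d = 0 then (P : ℂ) else 0 := by
  split_ifs with hd
  · subst hd; simp
  · have hne : ω ^ d ≠ 1 := by
      intro h0
      have hdvd := (h.zpow_eq_one_iff_dvd d).1 h0
      have habs : |d| < (P : ℤ) := abs_lt.2 ⟨h1, h2⟩
      exact hd (Int.eq_zero_of_abs_lt_dvd hdvd habs)
    have hpow : (ω ^ d) ^ P = 1 := by
      rw [← zpow_natCast, ← zpow_mul, mul_comm, zpow_mul, zpow_natCast, h.pow_eq_one, one_zpow]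
    have : ∀ k ∈ Finset.range P, ω ^ (d * (k : ℤ)) = (ω ^ d) ^ k := by
      intro k _
      rw [zpow_mul, zpow_natCast]
    rw [Finset.sum_congr rfl this, geom_sum_eq hne, hpow, sub_self, zero_div]

/-- `S_m(q)` equals the circular convolution of `Z_c^{end-res}` with the
rectangular-window DFT `C_m`, with the frequency argument taken modulo `P`. -/
theorem Sm_as_circular_convolution
    (P L T : ℕ) (hP : 1 ≤ P) (hTL : T < L) (hLP : L ≤ P)
    (zc : ℤ → ℝ)
    (ω : ℂ) (hω : ω = Complex.exp (-(2 * Real.pi * Complex.I) / (P : ℂ)))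
    (Zend : ℤ → ℂ)
    (hZ : ∀ p : ℤ, Zend p = ∑ k ∈ Finset.Icc (-(T : ℤ)) ((P : ℤ) - (T : ℤ) - 1),
      ((zc (k + (P : ℤ)) - zc k : ℝ) : ℂ) * ω ^ (k * p))
    (C : ℕ → ℤ → ℂ)
    (hC : ∀ (m : ℕ) (p : ℤ), C m p = ∑ k ∈ Finset.Icc (-(T : ℤ)) (-(m : ℤ) - 1),
      ω ^ (k * p)) :
    ∀ m : ℕ, m < T → ∀ q : ℕ,
      (∑ j ∈ Finset.range (T - m),
          ((zc ((P : ℤ) - (T : ℤ) + (j : ℤ)) - zc (-(T : ℤ) + (j : ℤ)) : ℝ) : ℂ)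
            * ω ^ (((j : ℤ) - (T : ℤ)) * (q : ℤ)))
        = (1 / (P : ℂ)) * ∑ k ∈ Finset.range P,
            Zend (((q : ℤ) - (k : ℤ)) % (P : ℤ)) * C m (k : ℤ) := by
  intro m hm q
  have hP0 : (P : ℂ) ≠ 0 := by exact_mod_cast (by omega : P ≠ 0)
  have hprim : IsPrimitiveRoot ω P := by
    have h := (Complex.isPrimitiveRoot_exp P (by omega)).inv
    rw [← Complex.exp_neg, ← neg_div] at h
    rw [hω]; exact h
  have hω0 : ω ≠ 0 := by rw [hω]; exact Complex.exp_ne_zero _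
  have hmod : ∀ n p : ℤ, ω ^ (n * (p % (P : ℤ))) = ω ^ (n * p) := by
    intro n p
    conv_rhs => rw [← Int.emod_add_mul_ediv p P]
    have e : n * (p % (P : ℤ) + P * (p / P)) = n * (p % (P : ℤ)) + P * (n * (p / P)) := by ring
    rw [e, zpow_add₀ hω0, zpow_mul ω (P : ℤ), zpow_natCast, hprim.pow_eq_one, one_zpow, mul_one]
  set a : ℤ → ℂ := fun n => ((zc (n + (P : ℤ)) - zc n : ℝ) : ℂ) with ha
  have hL : (∑ j ∈ Finset.range (T - m),
          ((zc ((P : ℤ) - (T : ℤ) + (j : ℤ)) - zc (-(T : ℤ) + (j : ℤ)) : ℝ) : ℂ)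
            * ω ^ (((j : ℤ) - (T : ℤ)) * (q : ℤ)))
      = ∑ l ∈ Finset.Icc (-(T : ℤ)) (-(m : ℤ) - 1), a l * ω ^ (l * (q : ℤ)) := by
    refine Finset.sum_bij' (fun j _ => (j : ℤ) - T) (fun l _ => (l + T).toNat) ?_ ?_ ?_ ?_ ?_
    · intro j hj
      simp only [Finset.mem_range, Finset.mem_Icc] at *
      omega
    · intro l hl
      simp only [Finset.mem_range, Finset.mem_Icc] at *
      omega
    · intro j hj
      simp
    · intro l hl
      simp only [Finset.mem_Icc] at hl
      omega
    · intro j hj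
      have e1 : (P : ℤ) - T + j = (j : ℤ) - T + P := by ring
      have e2 : -(T : ℤ) + j = (j : ℤ) - T := by ring
      simp only [ha, e1, e2]
  have hR : ∑ k ∈ Finset.range P, Zend (((q : ℤ) - (k : ℤ)) % (P : ℤ)) * C m (k : ℤ)
      = ∑ l ∈ Finset.Icc (-(T : ℤ)) (-(m : ℤ) - 1), (P : ℂ) * (a l * ω ^ (l * (q : ℤ))) := by
    have h1 : ∀ k ∈ Finset.range P, Zend (((q : ℤ) - (k : ℤ)) % (P : ℤ)) * C m (k : ℤ)
        = ∑ l ∈ Finset.Icc (-(T : ℤ)) (-(m : ℤ) - 1),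
          ∑ n ∈ Finset.Icc (-(T : ℤ)) ((P : ℤ) - (T : ℤ) - 1),
            (a n * ω ^ (n * (q : ℤ))) * ω ^ ((l - n) * (k : ℤ)) := by
      intro k _
      rw [hZ, hC, Finset.sum_mul_sum, Finset.sum_comm]
      refine Finset.sum_congr rfl fun l _ => Finset.sum_congr rfl fun n _ => ?_
      rw [hmod, mul_assoc, mul_assoc, ← zpow_add₀ hω0, ← zpow_add₀ hω0]
      congr 2
      ring
    rw [Finset.sum_congr rfl h1, Finset.sum_comm]
    refine Finset.sum_congr rfl fun l hl => ?_
    rw [Finset.sum_comm]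
    rw [Finset.mem_Icc] at hl
    have h2 : ∀ n ∈ Finset.Icc (-(T : ℤ)) ((P : ℤ) - (T : ℤ) - 1),
        ∑ k ∈ Finset.range P, (a n * ω ^ (n * (q : ℤ))) * ω ^ ((l - n) * (k : ℤ))
        = if l = n then (P : ℂ) * (a n * ω ^ (n * (q : ℤ))) else 0 := by
      intro n hn
      rw [Finset.mem_Icc] at hn
      rw [← Finset.mul_sum, aux_orth P ω hprim (l - n) (by omega) (by omega)]
      simp only [sub_eq_zero]
      split_ifs
      · ring
      · ring
    rw [Finset.sum_congr rfl h2, Finset.sum_ite_eq, if_pos]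
    rw [Finset.mem_Icc]
    omega
  rw [hL, hR, ← Finset.mul_sum, ← mul_assoc, one_div, inv_mul_cancel₀ hP0, one_mul]
end
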